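/- Let Kₙ be the complete graph of order n ≥ 3 and let f₀ : V(G₁) → V(G₂) be a constant function between two disjoint copies G₁, G₂ of Kₙ. Then dim(C(Kₙ, f₀)) = 2n − 3. -/

import Mathlib

/-- The functigraph `C(G, f)`: two disjoint copies of `G` (as `Sum.inl`/`Sum.inr`),
with an edge from each `Sum.inl u` to `Sum.inr (f u)`. -/
def functigraph {V : Type*} (G : SimpleGraph V) (f : V → V) : SimpleGraph (V ⊕ V) :=
  SimpleGraph.fromRel (fun x y =>
    match x, y with
    | Sum.inl a, Sum.inl b => G.Adj a b
    | Sum.inr a, Sum.inr b => G.Adj a b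
    | Sum.inl a, Sum.inr b => f a = b
    | Sum.inr _, Sum.inl _ => False)

/-- `S` is a resolving set of `H`: every pair of distinct vertices is resolved by some `w ∈ S`. -/
def IsResolving {V : Type*} (H : SimpleGraph V) (S : Set V) : Prop :=
  ∀ x y : V, x ≠ y → ∃ w ∈ S, H.dist x w ≠ H.dist y w

/-- The metric dimension of `H`: minimum cardinality of a (finite) resolving set. -/
noncomputable def metricDim {V : Type*} (H : SimpleGraph V) : ℕ :=
  sInf {k | ∃ S : Set V, IsResolving H S ∧ S.Finite ∧ S.ncard = k}

/-- The cycle graph on `ZMod n` (for `n ≥ 3`): `i` is adjacent to `i ± 1`. -/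
def cycGraph (n : ℕ) : SimpleGraph (ZMod n) :=
  SimpleGraph.fromRel (fun i j => j = i + 1)

/-- The closed neighborhood `N[S]` of a set `S` in `H`. -/
def closedNbhd {V : Type*} (H : SimpleGraph V) (S : Set V) : Set V :=
  S ∪ {x | ∃ s ∈ S, H.Adj x s}

/-
Two vertices with the same neighbours outside the pair are exchanged by an automorphism fixing all
other vertices, so a resolving set misses at most one vertex of each class of such twins. When `f`
is constantly `c`, the graph `C(Kₙ, f)` has the three twin classes `G₁`, `G₂ \ {c}` and `{c}`, so
at most three vertices can be missed; conversely, omitting one vertex of each class leaves a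
resolving set, as the adjacencies to the remaining vertices already tell the classes apart.
-/

section Twins

variable {V W : Type*} {G : SimpleGraph V} {H : SimpleGraph W}

theorem edist_hom_le (φ : G →g H) (u v : V) : H.edist (φ u) (φ v) ≤ G.edist u v :=
  le_iInf fun p ↦ p.length_map φ ▸ (p.map φ).edist_le

theorem dist_iso (φ : G ≃g H) (u v : V) : H.dist (φ u) (φ v) = G.dist u v := by
  have edist_iso : H.edist (φ u) (φ v) = G.edist u v :=
    (edist_hom_le φ.toHom u v).antisymm <| by
      simpa using edist_hom_le φ.symm.toHom (φ u) (φ v)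
  simp only [SimpleGraph.dist, edist_iso]

/-- `x` and `y` are twins in `G`: they have the same neighbours outside `{x, y}`. This covers both
true twins (adjacent) and false twins (non-adjacent), and every vertex is a twin of itself. -/
def Twins (G : SimpleGraph V) (x y : V) : Prop :=
  ∀ w, w ≠ x → w ≠ y → (G.Adj x w ↔ G.Adj y w)

/-- The automorphism of `G` that exchanges two twins and fixes all other vertices. -/
def Twins.swapIso [DecidableEq V] {x y : V} (h : Twins G x y) : G ≃g G where
  toEquiv := Equiv.swap x y
  map_rel_iff' := by
    intro u v
    have hu := h u
    have hv := h v
    simp only [Equiv.swap_apply_def]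
    grind [SimpleGraph.adj_comm, SimpleGraph.irrefl]

theorem Twins.dist_eq {x y w : V} (h : Twins G x y) (hx : w ≠ x) (hy : w ≠ y) :
    G.dist x w = G.dist y w := by
  classical
  simpa [Twins.swapIso, Equiv.swap_apply_of_ne_of_ne hx hy] using (dist_iso h.swapIso x w).symm

end Twins

section Resolving

variable {V ι : Type*} {G : SimpleGraph V} {S : Set V}

theorem IsResolving.mem_or_mem_of_twins (hS : IsResolving G S) {x y : V} (hxy : x ≠ y)
    (h : Twins G x y) : x ∈ S ∨ y ∈ S := by
  by_contra! hmem
  obtain ⟨w, hw, hdist⟩ := hS x y hxy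
  exact hdist (h.dist_eq (ne_of_mem_of_not_mem hw hmem.1) (ne_of_mem_of_not_mem hw hmem.2))

theorem IsResolving.injOn_compl (hS : IsResolving G S) {p : V → ι}
    (hp : ∀ x y, p x = p y → Twins G x y) : Set.InjOn p Sᶜ := fun x hx y hy hxy ↦ by
  by_contra hne
  exact (hS.mem_or_mem_of_twins hne (hp x y hxy)).elim hx hy

theorem IsResolving.ncard_compl_le_card [Finite ι] (hS : IsResolving G S) {p : V → ι}
    (hp : ∀ x y, p x = p y → Twins G x y) : Sᶜ.ncard ≤ Nat.card ι :=
  (hS.injOn_compl hp).ncard_image ▸ Set.ncard_le_card _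

theorem isResolving_of_connected_of_adj (hG : G.Connected)
    (h : ∀ x ∉ S, ∀ y ∉ S, x ≠ y → ∃ w ∈ S, ¬(G.Adj x w ↔ G.Adj y w)) : IsResolving G S := by
  intro x y hxy
  by_cases hx : x ∈ S
  · exact ⟨x, hx, by simpa using (hG.pos_dist_of_ne hxy.symm).ne⟩
  by_cases hy : y ∈ S
  · exact ⟨y, hy, by simpa using (hG.pos_dist_of_ne hxy).ne'⟩
  obtain ⟨w, hw, hadj⟩ := h x hx y hy hxy
  refine ⟨w, hw, fun hdist ↦ hadj ?_⟩
  rw [← SimpleGraph.dist_eq_one_iff_adj, ← SimpleGraph.dist_eq_one_iff_adj, hdist]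

theorem metricDim_eq_card_sub_ncard [Finite V] {R : Set V} (hR : IsResolving G Rᶜ)
    (hmax : ∀ S, IsResolving G S → Sᶜ.ncard ≤ R.ncard) :
    metricDim G = Nat.card V - R.ncard := by
  refine IsLeast.csInf_eq ⟨⟨Rᶜ, hR, Set.toFinite _, Set.ncard_compl R⟩, ?_⟩
  rintro _ ⟨S, hS, -, rfl⟩
  have hcompl := hmax S hS
  have hcard := S.ncard_add_ncard_compl
  omega

end Resolving

section Functigraph

variable {V : Type*} {G : SimpleGraph V} {f : V → V} {a b : V}

@[simp]
theorem functigraph_adj_inl_inl :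
    (functigraph G f).Adj (Sum.inl a) (Sum.inl b) ↔ G.Adj a b := by
  simpa [functigraph, G.adj_comm b a] using SimpleGraph.Adj.ne

@[simp]
theorem functigraph_adj_inr_inr :
    (functigraph G f).Adj (Sum.inr a) (Sum.inr b) ↔ G.Adj a b := by
  simpa [functigraph, G.adj_comm b a] using SimpleGraph.Adj.ne

@[simp]
theorem functigraph_adj_inl_inr : (functigraph G f).Adj (Sum.inl a) (Sum.inr b) ↔ f a = b := by
  simp [functigraph]

@[simp]
theorem functigraph_adj_inr_inl : (functigraph G f).Adj (Sum.inr a) (Sum.inl b) ↔ f b = a := by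
  simp [functigraph]

theorem functigraph_connected (hG : G.Connected) (f : V → V) : (functigraph G f).Connected := by
  obtain ⟨v⟩ := hG.nonempty
  let inrHom : G →g functigraph G f := ⟨Sum.inr, functigraph_adj_inr_inr.2⟩
  have reachable_inr (b : V) : (functigraph G f).Reachable (Sum.inr v) (Sum.inr b) :=
    (hG v b).map inrHom
  refine (functigraph G f).connected_iff_exists_forall_reachable.2 ⟨Sum.inr v, ?_⟩
  rintro (a | b)
  · exact (reachable_inr (f a)).trans (functigraph_adj_inr_inl.2 rfl).reachable
  · exact reachable_inr b

theorem Twins.functigraph_inl (h : Twins G a b) (hf : f a = f b) :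
    Twins (functigraph G f) (Sum.inl a) (Sum.inl b) := by
  rintro (w | w) hwa hwb
  · simpa using h w (by simpa using hwa) (by simpa using hwb)
  · simp [hf]

theorem Twins.functigraph_inr (h : Twins G a b) (hf : ∀ u, f u = a ↔ f u = b) :
    Twins (functigraph G f) (Sum.inr a) (Sum.inr b) := by
  rintro (w | w) hwa hwb
  · simpa using hf w
  · simpa using h w (by simpa using hwa) (by simpa using hwb)

theorem twins_top (a b : V) : Twins (⊤ : SimpleGraph V) a b := fun w hwa hwb ↦ by
  simp [hwa.symm, hwb.symm]

end Functigraph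

section ConstantFunctigraph

variable {V : Type*} {b c d : V}

theorem IsResolving.ncard_compl_le_three {S : Set (V ⊕ V)}
    (hS : IsResolving (functigraph (⊤ : SimpleGraph V) fun _ ↦ c) S) : Sᶜ.ncard ≤ 3 := by
  classical
  let twinClass : V ⊕ V → Fin 3 := Sum.elim (fun _ ↦ 0) fun v ↦ if v = c then 1 else 2
  have twins_of_eq (x y : V ⊕ V) (hxy : twinClass x = twinClass y) :
      Twins (functigraph ⊤ fun _ ↦ c) x y := by
    rcases x with x | x <;> rcases y with y | y
    · exact (twins_top x y).functigraph_inl rfl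
    · grind
    · grind
    · exact (twins_top x y).functigraph_inr (by grind)
  simpa using hS.ncard_compl_le_card twins_of_eq

theorem isResolving_functigraph_top_const (hdb : d ≠ b) (hdc : d ≠ c) (hbc : b ≠ c) :
    IsResolving (functigraph (⊤ : SimpleGraph V) fun _ ↦ c)
      {Sum.inl c, Sum.inr c, Sum.inr b}ᶜ := by
  have : Nonempty V := ⟨c⟩
  refine isResolving_of_connected_of_adj (functigraph_connected SimpleGraph.connected_top _)
    fun x hx y hy hxy ↦ ?_
  by_contra! adj_iff
  have adj_inl := adj_iff (Sum.inl d) (by simp [hdc])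
  have adj_inr := adj_iff (Sum.inr d) (by simp [hdb, hdc])
  simp only [Set.mem_compl_iff, not_not, Set.mem_insert_iff, Set.mem_singleton_iff] at hx hy
  -- Adjacency to `inl d` singles out `inr b`, adjacency to `inr d` singles out `inl c`.
  rcases hx with rfl | rfl | rfl <;> rcases hy with rfl | rfl | rfl <;>
    simp [hdc.symm, hbc.symm] at hxy adj_inl adj_inr

end ConstantFunctigraph

theorem stmt5_general {V : Type*} (hV : 3 ≤ Nat.card V) (c : V) :
    metricDim (functigraph (⊤ : SimpleGraph V) fun _ ↦ c) = 2 * Nat.card V - 3 := by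
  have : Finite V := Nat.finite_of_card_ne_zero (by omega)
  have three_le : 3 ≤ ENat.card V := by
    rw [ENat.card_eq_coe_natCard]
    exact_mod_cast hV
  obtain ⟨b, hbc, -⟩ := ENat.exists_ne_ne_of_three_le three_le c c
  obtain ⟨d, hdb, hdc⟩ := ENat.exists_ne_ne_of_three_le three_le b c
  have ncard_omitted : ({Sum.inl c, Sum.inr c, Sum.inr b} : Set (V ⊕ V)).ncard = 3 :=
    Set.ncard_eq_three.2 ⟨_, _, _, by simp, by simp, by simpa using hbc.symm, rfl⟩
  have dim_eq := metricDim_eq_card_sub_ncard (isResolving_functigraph_top_const hdb hdc hbc)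
    fun S hS ↦ ncard_omitted ▸ hS.ncard_compl_le_three
  rw [dim_eq, ncard_omitted, Nat.card_sum, two_mul]

theorem stmt5 (n : ℕ) (hn : 3 <= n) (f₀ : Fin n -> Fin n) (c : Fin n)
    (hf : ∀ u, f₀ u = c) :
    metricDim (functigraph (⊤ : SimpleGraph (Fin n)) f₀) = 2 * n - 3 := by
  obtain rfl : f₀ = fun _ ↦ c := funext hf
  simpa using stmt5_general (by simpa using hn) c
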